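/- For every integer a: if a mod M ∈ T_1 then ψ''(β^a R''_1) = −2^{3s} + 2^{2s} − 1, ψ''(β^a R''_2) = 2^{s−1}(2^s − 1)(2^{3s} + 2^s + 1), and ψ''(β^a R''_3) = −2^{s−1}(2^s − 1)(2^{3s} − 2^s + 1); if a mod M ∈ T_2 then ψ''(β^a R''_1) = (2^s − 1)(2^{3s} + 2^s + 1), ψ''(β^a R''_2) = −2^{s−1}(2^{3s+1} − 2^{2s} + 1), and ψ''(β^a R''_3) = 2^{s−1}(2^s − 1)²; if a mod M ∈ T_3 then ψ''(β^a R''_1) = −(2^s + 1)(2^{3s} − 2^s + 1), ψ''(β^a R''_2) = 2^{s−1}(2^{2s} − 1), and ψ''(β^a R''_3) = 2^{s−1}(2^{3s+1} + 2^{2s} − 2^{s+1} + 1). -/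

import Mathlib

noncomputable section

open scoped BigOperators

/-- `M = 2^{2s} + 2^s + 1`. -/
abbrev Mof (s : ℕ) : ℕ := 2 ^ (2 * s) + 2 ^ s + 1

/-- The relative trace from `F` (of order `2^{3s}`) to its subfield `E` of order `2^s`:
`Tr_{F/E}(x) = x + x^{2^s} + x^{2^{2s}}`, viewed as a map `F → F`. -/
def trFE {F : Type*} [Field F] (s : ℕ) (x : F) : F :=
  x + x ^ (2 ^ s) + x ^ (2 ^ (2 * s))

/-- `ψ(x) = 1` if the absolute trace `Tr_{F/𝔽₂}(x) = 0`, and `-1` otherwise. -/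
def psi (F : Type*) [Field F] [Algebra (ZMod 2) F] (x : F) : ℤ :=
  if Algebra.trace (ZMod 2) F x = 0 then 1 else -1

/-- `ψ(cS) = ∑_{x ∈ S} ψ(c·x)`. -/
def psiSum (F : Type*) [Field F] [Algebra (ZMod 2) F] (c : F) (S : Set F) : ℤ :=
  ∑ᶠ x ∈ S, psi F (c * x)

/-- `D = {u ∈ F^× : Tr_{F/E}(u⁻¹) = 0}`. -/
def Dset (F : Type*) [Field F] (s : ℕ) : Set F :=
  {u | u ≠ 0 ∧ trFE s u⁻¹ = 0}

/-- `S_a = {u ∈ F^× : Tr_{F/E}(u^{2^s+1}) = 0 ∧ Tr_{F/E}(ω^a u) = 0}`. -/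
def Sa {F : Type*} [Field F] (s : ℕ) (ω : F) (a : ℤ) : Set F :=
  {u | u ≠ 0 ∧ trFE s (u ^ (2 ^ s + 1)) = 0 ∧ trFE s (ω ^ a * u) = 0}

/-- `T₁ ⊆ ℤ/Mℤ`: classes `a` with `|S_a| = 2^s - 1`. -/
def T1 {F : Type*} [Field F] (s : ℕ) (ω : F) : Set (ZMod (Mof s)) :=
  {x | (Sa s ω (x.val : ℤ)).ncard = 2 ^ s - 1}

/-- `T₂ ⊆ ℤ/Mℤ`: classes `a` with `|S_a| = 2(2^s - 1)`. -/
def T2 {F : Type*} [Field F] (s : ℕ) (ω : F) : Set (ZMod (Mof s)) :=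
  {x | (Sa s ω (x.val : ℤ)).ncard = 2 * (2 ^ s - 1)}

/-- `T₃ ⊆ ℤ/Mℤ`: classes `a` with `|S_a| = 0`. -/
def T3 {F : Type*} [Field F] (s : ℕ) (ω : F) : Set (ZMod (Mof s)) :=
  {x | (Sa s ω (x.val : ℤ)).ncard = 0}

/-- The cyclotomic class `C_i^{(M,K)} = {g^{i+Mt} : t ∈ ℤ}`. -/
def cyc {K : Type*} [Field K] (M : ℕ) (g : K) (i : ℤ) : Set K :=
  {x | ∃ t : ℤ, x = g ^ (i + (M : ℤ) * t)}

/-- `⋃_{i ∈ T} C_i^{(M,K)}` for a set `T ⊆ ℤ/Mℤ` of indices. -/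
def Rclass {K : Type*} [Field K] (s : ℕ) (g : K) (T : Set (ZMod (Mof s))) : Set K :=
  ⋃ i ∈ T, cyc (Mof s) g ((i.val : ℤ))

/-- The family `R_0 = {0}`, `R_k = ⋃_{i ∈ T_k} C_i^{(M,K)}`, `k = 1, 2, 3`. -/
def Rfam {F K : Type*} [Field F] [Field K] (s : ℕ) (ω : F) (g : K) : Fin 4 → Set K :=
  ![{0}, Rclass s g (T1 s ω), Rclass s g (T2 s ω), Rclass s g (T3 s ω)]

/-- Indicator `[P] = 1` if `P` holds, `0` otherwise. -/
def Ind (P : Prop) : ℤ := @ite ℤ P (Classical.propDecidable P) 1 0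

/-!
Let `q = 2 ^ s` and `A = Fˣ / Eˣ`. The Gauss sum over `F` of the tautological character of `Fˣ` with
values in `ℤ[A]` is `q D - ∑ a, a`, where `D ⊆ A` is the Singer difference set of trace-zero points.
The Davenport–Hasse relation, which holds over any commutative ring once the additive character
sums to zero, therefore gives the Gauss sum over `H` as the cube of this element, and the required
values `ψ''(β^a R''_k)` are coefficients of its products with the inverses of subsets of `A`.

The identity `Tr (u ^ (q + 1)) = N(u) Tr (u⁻¹)` shows that `|S_a| / (q - 1)` is the number of
ordered factorizations of the class of `ω ^ a` into two members of `D`. Two members of `D` are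
determined up to order by their product, so this number is at most `2`; squaring permutes `D` in
characteristic two, so it is `1` exactly on `D`. Hence `D * D = D + 2 L`, where `L` is the set of
classes with two factorizations, and the products follow from `D * D⁻¹ = q + ∑ a, a`.
-/

section DavenportHasse

open Polynomial UniqueFactorizationMonoid
open scoped Classical

variable {F : Type*} [Field F]

/-- The von Mangoldt function of `F[X]`: the degree of `P` at the powers of an irreducible `P`, and
`0` at all other polynomials. -/
def polyVonMangoldt (g : F[X]) : ℕ :=
  if IsPrimePow g then (radical g).natDegree else 0

lemma polyVonMangoldt_pow {P : F[X]} (hP : P.Monic) (hirr : Irreducible P) {j : ℕ} (hj : j ≠ 0) :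
    polyVonMangoldt (P ^ j) = P.natDegree := by
  rw [polyVonMangoldt, if_pos (hirr.prime.isPrimePow.pow hj), radical_pow_of_prime hirr.prime hj,
    hP.normalize_eq_self]

lemma eq_and_eq_of_pow_eq_pow {P Q : F[X]} (hP : P.Monic) (hPirr : Irreducible P) (hQ : Q.Monic)
    (hQirr : Irreducible Q) {i j : ℕ} (hi : i ≠ 0) (hj : j ≠ 0) (h : P ^ i = Q ^ j) :
    P = Q ∧ i = j := by
  obtain rfl : P = Q := by
    have := congrArg radical h
    rwa [radical_pow_of_prime hPirr.prime hi, radical_pow_of_prime hQirr.prime hj,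
      hP.normalize_eq_self, hQ.normalize_eq_self] at this
  exact ⟨rfl, pow_injective_of_not_isUnit hPirr.not_isUnit hPirr.ne_zero h⟩

lemma exists_monic_irreducible_pow_eq {g : F[X]} (hg : g.Monic) (hpp : IsPrimePow g) :
    ∃ (P : F[X]) (j : ℕ), P.Monic ∧ Irreducible P ∧ j ≠ 0 ∧ P ^ j = g := by
  obtain ⟨p, j, hp, hj, rfl⟩ := hpp
  refine ⟨normalize p, j, monic_normalize hp.ne_zero,
    (normalize_associated p).symm.irreducible hp.irreducible, hj.ne', ?_⟩
  rw [← hg.normalize_eq_self]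
  exact (map_pow normalizeHom p j).symm

lemma natDegree_eq_sum_primeFactors {f : F[X]} (hf : f.Monic) :
    f.natDegree = ∑ P ∈ primeFactors f, (normalizedFactors f).count P * P.natDegree := by
  conv_lhs => rw [← hf.normalize_eq_self, ← prod_normalizedFactors_eq hf.ne_zero]
  rw [natDegree_multiset_prod _ (zero_notMem_normalizedFactors f), Finset.sum_multiset_map_count]
  simp only [primeFactors, smul_eq_mul]
  congr!

lemma pow_dvd_iff_le_count {f P : F[X]} (hf : f ≠ 0) (hP : P.Monic) (hirr : Irreducible P) {j : ℕ} :
    P ^ j ∣ f ↔ j ≤ (normalizedFactors f).count P := by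
  rw [pow_dvd_iff_le_emultiplicity, emultiplicity_eq_count_normalizedFactors hirr hf,
    hP.normalize_eq_self, Nat.cast_le]

lemma mem_primeFactors_iff_monic {f P : F[X]} (hf : f ≠ 0) :
    P ∈ primeFactors f ↔ P.Monic ∧ Irreducible P ∧ P ∣ f := by
  rw [mem_primeFactors, mem_normalizedFactors_iff' hf]
  constructor
  · rintro ⟨hirr, hn, hd⟩
    exact ⟨(normalize_eq_self_iff_monic hirr.ne_zero).1 hn, hirr, hd⟩
  · rintro ⟨hm, hirr, hd⟩
    exact ⟨hirr, hm.normalize_eq_self, hd⟩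

lemma exists_mem_primeFactors_pow_eq {f g : F[X]} (hf : f ≠ 0) (hg : g.Monic) (hpp : IsPrimePow g)
    (hdvd : g ∣ f) :
    ∃ P ∈ primeFactors f, ∃ j ∈ Finset.Icc 1 ((normalizedFactors f).count P), P ^ j = g := by
  obtain ⟨P, j, hP, hirr, hj, rfl⟩ := exists_monic_irreducible_pow_eq hg hpp
  refine ⟨P, (mem_primeFactors_iff_monic hf).2 ⟨hP, hirr, (dvd_pow_self P hj).trans hdvd⟩, j, ?_,
    rfl⟩
  exact Finset.mem_Icc.2 ⟨by lia, (pow_dvd_iff_le_count hf hP hirr).1 hdvd⟩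

/-- The weight of a polynomial attached to a Gauss sum: for a monic `f` it is
`χ (product of the roots) * ψ (sum of the roots)`. -/
def gaussWeight {R : Type*} [CommRing R] (χ : MulChar F R) (ψ : AddChar F R) (f : F[X]) : R :=
  χ ((-1) ^ f.natDegree * f.coeff 0) * ψ (-f.nextCoeff)

lemma gaussWeight_mul {R : Type*} [CommRing R] (χ : MulChar F R) (ψ : AddChar F R) {f g : F[X]}
    (hf : f.Monic) (hg : g.Monic) :
    gaussWeight χ ψ (f * g) = gaussWeight χ ψ f * gaussWeight χ ψ g := by
  have hconst : (-1 : F) ^ (f * g).natDegree * (f * g).coeff 0 =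
      (-1) ^ f.natDegree * f.coeff 0 * ((-1) ^ g.natDegree * g.coeff 0) := by
    rw [hf.natDegree_mul hg, mul_coeff_zero]
    ring
  rw [gaussWeight, hconst, hf.nextCoeff_mul hg, neg_add, AddChar.map_add_eq_mul, map_mul,
    gaussWeight, gaussWeight]
  ring

section Finite

variable (F) [Finite F]

lemma finite_monic_natDegree_eq (n : ℕ) : {f : F[X] | f.Monic ∧ f.natDegree = n}.Finite := by
  have : Finite (degreeLT F n) := .of_equiv _ (degreeLTEquiv F n).symm.toEquiv
  exact .of_equiv _ (monicEquivDegreeLT n).symm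

/-- The monic polynomials of degree `n` over a finite field. -/
def monicsOfDegree (n : ℕ) : Finset F[X] := (finite_monic_natDegree_eq F n).toFinset

variable {F}

@[simp] lemma mem_monicsOfDegree {n : ℕ} {f : F[X]} :
    f ∈ monicsOfDegree F n ↔ f.Monic ∧ f.natDegree = n := by
  simp [monicsOfDegree]

lemma sum_polyVonMangoldt_dvd {n : ℕ} {f : F[X]} (hf : f ∈ monicsOfDegree F n) :
    ∑ k ∈ Finset.Icc 1 n, ∑ g ∈ monicsOfDegree F k with g ∣ f, polyVonMangoldt g = n := by
  obtain ⟨hm, rfl⟩ := mem_monicsOfDegree.1 hf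
  have hdeg : f.natDegree = ∑ P ∈ primeFactors f,
      ∑ _j ∈ Finset.Icc 1 ((normalizedFactors f).count P), P.natDegree := by
    simpa using natDegree_eq_sum_primeFactors hm
  have hprime {P : F[X]} (hP : P ∈ primeFactors f) : P.Monic ∧ Irreducible P :=
    ((mem_primeFactors_iff_monic hm.ne_zero).1 hP).imp_right And.left
  conv_rhs => rw [hdeg]
  rw [Finset.sum_sigma', Finset.sum_sigma']
  symm
  refine Finset.sum_of_injOn (fun Pj ↦ ⟨Pj.2 * Pj.1.natDegree, Pj.1 ^ Pj.2⟩) ?_ ?_ ?_ ?_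
  · rintro ⟨P, i⟩ hPi ⟨Q, j⟩ hQj h
    simp only [Finset.coe_sigma, Set.mem_sigma_iff, Finset.mem_coe, Finset.mem_Icc] at hPi hQj
    simp only [Sigma.mk.injEq, heq_eq_eq] at h
    obtain ⟨hP, hPirr⟩ := hprime hPi.1
    obtain ⟨hQ, hQirr⟩ := hprime hQj.1
    obtain ⟨rfl, rfl⟩ := eq_and_eq_of_pow_eq_pow hP hPirr hQ hQirr (by lia) (by lia) h.2
    rfl
  · rintro ⟨P, j⟩ hPj
    simp only [Finset.coe_sigma, Set.mem_sigma_iff, Finset.mem_coe, Finset.mem_Icc] at hPj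
    obtain ⟨hP, hPirr⟩ := hprime hPj.1
    have hdvd : P ^ j ∣ f := (pow_dvd_iff_le_count hm.ne_zero hP hPirr).2 hPj.2.2
    have hle := natDegree_le_of_dvd hdvd hm.ne_zero
    rw [natDegree_pow] at hle
    simp only [Finset.coe_sigma, Set.mem_sigma_iff, Finset.mem_coe, Finset.mem_Icc,
      Finset.mem_filter, mem_monicsOfDegree]
    exact ⟨⟨Nat.mul_pos hPj.2.1 hPirr.natDegree_pos, hle⟩, ⟨hP.pow j, natDegree_pow P j⟩, hdvd⟩
  · rintro ⟨k, g⟩ hkg hnot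
    simp only [Finset.mem_sigma, Finset.mem_filter, mem_monicsOfDegree] at hkg
    obtain ⟨-, ⟨hg, rfl⟩, hdvd⟩ := hkg
    refine if_neg fun hpp ↦ hnot ?_
    obtain ⟨P, hP, j, hj, rfl⟩ := exists_mem_primeFactors_pow_eq hm.ne_zero hg hpp hdvd
    exact ⟨⟨P, j⟩, Finset.mem_coe.2 (Finset.mem_sigma.2 ⟨hP, hj⟩), by simp [natDegree_pow]⟩
  · rintro ⟨P, j⟩ hPj
    simp only [Finset.mem_sigma, Finset.mem_Icc] at hPj
    obtain ⟨hP, hPirr⟩ := hprime hPj.1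
    exact (polyVonMangoldt_pow hP hPirr (by lia)).symm

lemma sum_monicsOfDegree_dvd {M : Type*} [AddCommMonoid M] {n k : ℕ} (hk : k ≤ n)
    (φ : F[X] → F[X] → M) :
    ∑ f ∈ monicsOfDegree F n, ∑ g ∈ monicsOfDegree F k with g ∣ f, φ g (f / g) =
      ∑ g ∈ monicsOfDegree F k, ∑ h ∈ monicsOfDegree F (n - k), φ g h := by
  rw [Finset.sum_congr rfl fun f _ ↦ Finset.sum_filter _ _, Finset.sum_comm]
  refine Finset.sum_congr rfl fun g hg ↦ ?_
  obtain ⟨hgm, rfl⟩ := mem_monicsOfDegree.1 hg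
  rw [← Finset.sum_filter]
  symm
  refine Finset.sum_bij' (fun h _ ↦ g * h) (fun f _ ↦ f / g) ?_ ?_ ?_ ?_ ?_
  · intro h hh
    obtain ⟨hh, hd⟩ := mem_monicsOfDegree.1 hh
    simp only [Finset.mem_filter, mem_monicsOfDegree, dvd_mul_right, and_true]
    exact ⟨hgm.mul hh, by rw [hgm.natDegree_mul hh, hd]; lia⟩
  · intro f hf
    simp only [Finset.mem_filter, mem_monicsOfDegree] at hf
    obtain ⟨⟨hf, rfl⟩, h, rfl⟩ := hf
    have hh : h.Monic := hgm.of_mul_monic_left hf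
    rw [mul_div_cancel_left₀ _ hgm.ne_zero, mem_monicsOfDegree, hgm.natDegree_mul hh]
    exact ⟨hh, by lia⟩
  · intro h _
    exact mul_div_cancel_left₀ _ hgm.ne_zero
  · intro f hf
    exact EuclideanDomain.mul_div_cancel' hgm.ne_zero (Finset.mem_filter.1 hf).2
  · intro h _
    rw [mul_div_cancel_left₀ _ hgm.ne_zero]

theorem newton_identity_monicsOfDegree {R : Type*} [CommRing R] {wt : F[X] → R}
    (hmul : ∀ g h : F[X], g.Monic → h.Monic → wt (g * h) = wt g * wt h) (n : ℕ) :
    n * ∑ f ∈ monicsOfDegree F n, wt f = ∑ k ∈ Finset.Icc 1 n,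
      (∑ g ∈ monicsOfDegree F k, polyVonMangoldt g * wt g) *
        ∑ h ∈ monicsOfDegree F (n - k), wt h := by
  have hterm {f : F[X]} (hf : f ∈ monicsOfDegree F n) : n * wt f =
      ∑ k ∈ Finset.Icc 1 n, ∑ g ∈ monicsOfDegree F k with g ∣ f,
        polyVonMangoldt g * (wt g * wt (f / g)) := by
    conv_lhs => rw [← sum_polyVonMangoldt_dvd hf]
    push_cast
    simp_rw [Finset.sum_mul]
    refine Finset.sum_congr rfl fun k _ ↦ Finset.sum_congr rfl fun g hg ↦ ?_
    simp only [Finset.mem_filter, mem_monicsOfDegree] at hg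
    obtain ⟨⟨hg, -⟩, h, rfl⟩ := hg
    rw [mul_div_cancel_left₀ _ hg.ne_zero,
      hmul g h hg (hg.of_mul_monic_left (mem_monicsOfDegree.1 hf).1)]
  rw [Finset.mul_sum, Finset.sum_congr rfl fun f hf ↦ hterm hf, Finset.sum_comm]
  refine Finset.sum_congr rfl fun k hk ↦ ?_
  rw [sum_monicsOfDegree_dvd (Finset.mem_Icc.1 hk).2
    fun g h ↦ (polyVonMangoldt g : R) * (wt g * wt h), Finset.sum_mul_sum]
  simp_rw [mul_assoc]

lemma add_monomial_mem_monicsOfDegree {n : ℕ} (hn : n ≠ 0) {f : F[X]}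
    (hf : f ∈ monicsOfDegree F n) (c : F) : f + monomial (n - 1) c ∈ monicsOfDegree F n := by
  obtain ⟨hfm, rfl⟩ := mem_monicsOfDegree.1 hf
  have hlt : (monomial (f.natDegree - 1) c).degree < f.degree := by
    rw [degree_eq_natDegree hfm.ne_zero]
    exact (degree_monomial_le _ _).trans_lt (by exact_mod_cast Nat.pred_lt hn)
  exact mem_monicsOfDegree.2 ⟨hfm.add_of_left hlt, natDegree_add_eq_left_of_degree_lt hlt⟩

lemma nextCoeff_add_monomial {n : ℕ} (hn : n ≠ 0) {f : F[X]} (hf : f ∈ monicsOfDegree F n) (c : F) :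
    (f + monomial (n - 1) c).nextCoeff = f.nextCoeff + c := by
  have hd := (mem_monicsOfDegree.1 hf).2
  have hd' := (mem_monicsOfDegree.1 (add_monomial_mem_monicsOfDegree hn hf c)).2
  rw [nextCoeff_of_natDegree_pos (by lia), nextCoeff_of_natDegree_pos (by lia), hd, hd', coeff_add,
    coeff_monomial_same]

lemma sum_filter_nextCoeff_eq {M : Type*} [AddCommMonoid M] {n : ℕ} (hn : 2 ≤ n) (b c : F)
    (φ : F → M) :
    ∑ f ∈ monicsOfDegree F n with f.nextCoeff = b, φ (f.coeff 0) =
      ∑ f ∈ monicsOfDegree F n with f.nextCoeff = c, φ (f.coeff 0) := by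
  have hmaps (b c : F) : ∀ f ∈ (monicsOfDegree F n).filter (·.nextCoeff = b),
      f + monomial (n - 1) (c - b) ∈ (monicsOfDegree F n).filter (·.nextCoeff = c) := fun f hf ↦ by
    obtain ⟨hfn, rfl⟩ := Finset.mem_filter.1 hf
    exact Finset.mem_filter.2 ⟨add_monomial_mem_monicsOfDegree (by lia) hfn _,
      by rw [nextCoeff_add_monomial (by lia) hfn, add_sub_cancel]⟩
  refine Finset.sum_nbij' (· + monomial (n - 1) (c - b)) (· + monomial (n - 1) (b - c))
    (hmaps b c) (hmaps c b) (fun f _ ↦ ?_) (fun f _ ↦ ?_) (fun f _ ↦ ?_)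
  · rw [add_assoc, ← map_add, sub_add_sub_cancel, sub_self, monomial_zero_right, add_zero]
  · rw [add_assoc, ← map_add, sub_add_sub_cancel, sub_self, monomial_zero_right, add_zero]
  · rw [coeff_add, coeff_monomial_of_ne _ (by lia), add_zero]

lemma monicsOfDegree_zero : monicsOfDegree F 0 = {1} := by
  ext f
  simp only [mem_monicsOfDegree, Finset.mem_singleton]
  exact ⟨fun h ↦ h.1.natDegree_eq_zero.1 h.2, by rintro rfl; simp⟩

end Finite

section Fintype

variable [Fintype F]

lemma sum_monicsOfDegree_one {M : Type*} [AddCommMonoid M] (φ : F[X] → M) :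
    ∑ f ∈ monicsOfDegree F 1, φ f = ∑ a, φ (X - C a) := by
  symm
  refine Finset.sum_bij (fun a _ ↦ X - C a) (fun a _ ↦ ?_) (fun a _ b _ h ↦ ?_) (fun f hf ↦ ?_)
    fun _ _ ↦ rfl
  · simpa using monic_X_sub_C a
  · simpa using h
  · obtain ⟨hf, hd⟩ := mem_monicsOfDegree.1 hf
    exact ⟨-f.coeff 0, Finset.mem_univ _, by rw [map_neg, sub_neg_eq_add, ← hf.eq_X_add_C hd]⟩

variable {R : Type*} [CommRing R] (χ : MulChar F R) (ψ : AddChar F R)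

lemma sum_gaussWeight_eq_zero (hψ : ∑ x, ψ x = 0) {n : ℕ} (hn : 2 ≤ n) :
    ∑ f ∈ monicsOfDegree F n, gaussWeight χ ψ f = 0 := by
  have hfiber (c : F) : ∑ f ∈ monicsOfDegree F n with f.nextCoeff = c, gaussWeight χ ψ f =
      (∑ f ∈ monicsOfDegree F n with f.nextCoeff = 0, χ ((-1) ^ n * f.coeff 0)) * ψ (-c) := by
    rw [← sum_filter_nextCoeff_eq hn c 0 fun a ↦ χ ((-1) ^ n * a), Finset.sum_mul]
    refine Finset.sum_congr rfl fun f hf ↦ ?_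
    simp only [Finset.mem_filter, mem_monicsOfDegree] at hf
    rw [gaussWeight, hf.1.2, hf.2]
  rw [← Finset.sum_fiberwise _ nextCoeff, Finset.sum_congr rfl fun c _ ↦ hfiber c, ← Finset.mul_sum,
    show ∑ c, ψ (-c) = 0 from (Equiv.sum_comp (Equiv.neg F) (ψ ·)).trans hψ, mul_zero]

theorem sum_polyVonMangoldt_mul_gaussWeight (hψ : ∑ x, ψ x = 0) {n : ℕ} (hn : n ≠ 0) :
    ∑ g ∈ monicsOfDegree F n, polyVonMangoldt g * gaussWeight χ ψ g =
      (-1) ^ (n + 1) * gaussSum χ ψ ^ n := by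
  have hnewton := newton_identity_monicsOfDegree (wt := gaussWeight χ ψ) fun _ _ ↦
    gaussWeight_mul χ ψ
  have hzero : ∑ f ∈ monicsOfDegree F 0, gaussWeight χ ψ f = 1 := by
    simp [monicsOfDegree_zero, gaussWeight, nextCoeff]
  have hone : ∑ f ∈ monicsOfDegree F 1, gaussWeight χ ψ f = gaussSum χ ψ := by
    rw [sum_monicsOfDegree_one, gaussSum]
    simp [gaussWeight, nextCoeff]
  induction n, Nat.one_le_iff_ne_zero.2 hn using Nat.le_induction with
  | base => simpa [hone, hzero] using (hnewton 1).symm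
  | succ n h1n ih =>
    have h := hnewton (n + 1)
    rw [sum_gaussWeight_eq_zero χ ψ hψ (by lia), mul_zero, Finset.sum_Icc_succ_top (by lia),
      Nat.sub_self, hzero, mul_one] at h
    obtain ⟨m, rfl⟩ : ∃ m, n = m + 1 := ⟨n - 1, by lia⟩
    have hlow : ∀ k ∈ Finset.Icc 1 m,
        (∑ g ∈ monicsOfDegree F k, polyVonMangoldt g * gaussWeight χ ψ g) *
          ∑ h ∈ monicsOfDegree F (m + 1 + 1 - k), gaussWeight χ ψ h = 0 := fun k hk ↦ by
      rw [sum_gaussWeight_eq_zero χ ψ hψ (by have := (Finset.mem_Icc.1 hk).2; lia), mul_zero]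
    rw [Finset.sum_Icc_succ_top (by lia), Finset.sum_eq_zero hlow, ih (by lia),
      Nat.add_sub_cancel_left, hone] at h
    linear_combination -h

end Fintype

section FiniteExtension

variable {K : Type*} [Field K] [Algebra F K]

open IntermediateField

lemma norm_eq_minpoly_coeff_zero [FiniteDimensional F K] (x : K) :
    Algebra.norm F x =
      ((-1) ^ (minpoly F x).natDegree * (minpoly F x).coeff 0) ^ Module.finrank F⟮x⟯ K := by
  have hx := IsIntegral.of_finite F x
  rw [Algebra.norm_eq_norm_adjoin, ← adjoin.powerBasis_gen hx,
    Algebra.PowerBasis.norm_gen_eq_coeff_zero_minpoly, adjoin.powerBasis_gen hx,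
    adjoin.powerBasis_dim, minpoly_gen F x]

lemma norm_trace_eq_gaussWeight [FiniteDimensional F K] {R : Type*} [CommRing R]
    (χ : MulChar F R) (ψ : AddChar F R) (x : K) :
    χ (Algebra.norm F x) * ψ (Algebra.trace F K x) =
      gaussWeight χ ψ (minpoly F x ^ Module.finrank F⟮x⟯ K) := by
  have hm := minpoly.monic (IsIntegral.of_finite F x)
  rw [gaussWeight, norm_eq_minpoly_coeff_zero, trace_eq_finrank_mul_minpoly_nextCoeff,
    natDegree_pow, hm.nextCoeff_pow]
  congr 2
  · rw [coeff_zero_eq_eval_zero, coeff_zero_eq_eval_zero, eval_pow]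
    ring
  · rw [nsmul_eq_mul, mul_neg]

lemma natDegree_minpoly_mul_finrank [FiniteDimensional F K] (x : K) :
    (minpoly F x).natDegree * Module.finrank F⟮x⟯ K = Module.finrank F K := by
  rw [← adjoin.finrank (.of_finite F x), Module.finrank_mul_finrank]

lemma card_filter_minpoly_eq [Finite F] [Fintype K] {P : F[X]} (hP : P.Monic)
    (hirr : Irreducible P) (hdvd : P.natDegree ∣ Module.finrank F K) :
    ({x : K | minpoly F x = P} : Finset K).card = P.natDegree := by
  have hsplit : (P.map (algebraMap F K)).Splits := by
    have hcard : Fintype.card K = Nat.card F ^ Module.finrank F K := by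
      rw [Fintype.card_eq_nat_card, Module.natCard_eq_pow_finrank (K := F)]
    have hroots : (X ^ Fintype.card K - X : F[X]) ≠ 0 :=
      FiniteField.X_pow_card_sub_X_ne_zero F Fintype.one_lt_card
    refine (IsSplittingField.splits K (X ^ Fintype.card K - X : F[X])).of_dvd
      (map_ne_zero hroots) (Polynomial.map_dvd _ ?_)
    rw [hcard]
    exact hirr.natDegree_dvd_iff_dvd_X_pow_card_pow_sub_X.1 hdvd
  have hsep : P.Separable := PerfectField.separable_of_irreducible hirr
  rw [← card_rootSet_eq_natDegree hsep hsplit, ← Set.toFinset_card]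
  congr 1
  ext x
  simp only [Finset.mem_filter, Finset.mem_univ, true_and, Set.mem_toFinset, mem_rootSet,
    hP.ne_zero, ne_eq, not_false_eq_true]
  exact ⟨by rintro rfl; exact minpoly.aeval F x,
    fun h ↦ (minpoly.eq_of_irreducible_of_monic hirr h hP).symm⟩

lemma card_filter_minpoly_pow_eq [Finite F] [Fintype K] {g : F[X]}
    (hg : g ∈ monicsOfDegree F (Module.finrank F K)) :
    ({x : K | minpoly F x ^ Module.finrank F⟮x⟯ K = g} : Finset K).card = polyVonMangoldt g := by
  by_cases hpp : IsPrimePow g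
  · obtain ⟨P, j, hP, hirr, hj, rfl⟩ :=
      exists_monic_irreducible_pow_eq (mem_monicsOfDegree.1 hg).1 hpp
    have hdeg : j * P.natDegree = Module.finrank F K := by
      rw [← natDegree_pow, (mem_monicsOfDegree.1 hg).2]
    rw [polyVonMangoldt_pow hP hirr hj,
      ← card_filter_minpoly_eq hP hirr (Dvd.intro_left j hdeg)]
    congr 1
    ext x
    simp only [Finset.mem_filter, Finset.mem_univ, true_and]
    have hx := IsIntegral.of_finite F x
    constructor
    · exact fun h ↦ (eq_and_eq_of_pow_eq_pow (minpoly.monic hx) (minpoly.irreducible hx) hP hirr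
        Module.finrank_pos.ne' hj h).1
    · rintro rfl
      congr 1
      refine Nat.eq_of_mul_eq_mul_left hirr.natDegree_pos ?_
      rw [natDegree_minpoly_mul_finrank, ← hdeg, mul_comm]
  · rw [polyVonMangoldt, if_neg hpp, Finset.card_eq_zero, Finset.filter_eq_empty_iff]
    rintro x - rfl
    exact hpp ((minpoly.irreducible (.of_finite F x)).prime.isPrimePow.pow Module.finrank_pos.ne')

theorem davenport_hasse [Fintype F] [Fintype K] {R : Type*} [CommRing R] (χ : MulChar F R)
    (ψ : AddChar F R) (hψ : ∑ x, ψ x = 0) :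
    ∑ x : K, χ (Algebra.norm F x) * ψ (Algebra.trace F K x) =
      (-1) ^ (Module.finrank F K + 1) * gaussSum χ ψ ^ Module.finrank F K := by
  have hmem (x : K) : minpoly F x ^ Module.finrank F⟮x⟯ K ∈ monicsOfDegree F (Module.finrank F K) :=
    mem_monicsOfDegree.2 ⟨(minpoly.monic (.of_finite F x)).pow _, by
      rw [natDegree_pow, mul_comm, natDegree_minpoly_mul_finrank]⟩
  rw [← sum_polyVonMangoldt_mul_gaussWeight χ ψ hψ Module.finrank_pos.ne',
    ← Finset.sum_fiberwise_of_maps_to fun x _ ↦ hmem x]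
  refine Finset.sum_congr rfl fun g hg ↦ ?_
  rw [← card_filter_minpoly_pow_eq (K := K) hg, ← nsmul_eq_mul, ← Finset.sum_const]
  refine Finset.sum_congr rfl fun x hx ↦ ?_
  rw [norm_trace_eq_gaussWeight, (Finset.mem_filter.1 hx).2]

end FiniteExtension

end DavenportHasse

section GroupRing

open MonoidAlgebra

variable {A : Type*}

/-- The element `∑ a ∈ S, a` of the integral group ring. -/
def indicatorSum (S : Finset A) : MonoidAlgebra ℤ A := ∑ a ∈ S, single a 1

lemma coeff_indicatorSum [DecidableEq A] (S : Finset A) (a : A) :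
    (indicatorSum S).coeff a = if a ∈ S then 1 else 0 := by
  simp [indicatorSum, coeff_sum, Finsupp.single_apply, Finset.sum_apply']

variable [CommGroup A]

/-- The involution `∑ c_a a ↦ ∑ c_a a⁻¹` of the integral group ring of a commutative group. -/
def inversion : MonoidAlgebra ℤ A →+* MonoidAlgebra ℤ A :=
  mapDomainRingHom ℤ (invMonoidHom : A →* A)

lemma inversion_indicatorSum (S : Finset A) :
    inversion (indicatorSum S) = ∑ a ∈ S, single a⁻¹ 1 := by
  simp [indicatorSum, inversion]

lemma coeff_mul_inversion_indicatorSum (x : MonoidAlgebra ℤ A) (S : Finset A) (b : A) :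
    (x * inversion (indicatorSum S)).coeff b = ∑ a ∈ S, x.coeff (b * a) := by
  simp [inversion_indicatorSum, Finset.mul_sum, coeff_sum, coeff_mul_single_apply]

lemma coeff_indicatorSum_mul_self [DecidableEq A] (S : Finset A) (b : A) :
    (indicatorSum S * indicatorSum S).coeff b = (S.filter fun a ↦ a⁻¹ * b ∈ S).card := by
  rw [indicatorSum, Finset.sum_mul, coeff_sum, Finset.sum_apply', Finset.card_filter]
  push_cast
  refine Finset.sum_congr rfl fun a _ ↦ ?_
  rw [coeff_single_mul_apply, one_mul, ← indicatorSum, coeff_indicatorSum]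

variable [Fintype A]

lemma indicatorSum_mul_univ (S : Finset A) :
    indicatorSum S * indicatorSum Finset.univ =
      (S.card : MonoidAlgebra ℤ A) * indicatorSum Finset.univ := by
  classical
  have hsingle (a : A) : single a 1 * indicatorSum Finset.univ =
      indicatorSum (Finset.univ : Finset A) := by
    ext b
    simp [coeff_single_mul_apply, coeff_indicatorSum]
  conv_lhs => rw [indicatorSum]
  rw [Finset.sum_mul, Finset.sum_congr rfl fun a _ ↦ hsingle a, Finset.sum_const, nsmul_eq_mul]

lemma inversion_indicatorSum_univ :
    inversion (indicatorSum Finset.univ) = indicatorSum (Finset.univ : Finset A) := by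
  rw [inversion_indicatorSum, indicatorSum]
  exact Equiv.sum_comp (Equiv.inv A) fun a ↦ single a (1 : ℤ)

end GroupRing

section SidonSet

variable {A : Type*} [CommGroup A] [DecidableEq A]

/-- The factorizations `b = a * (a⁻¹ * b)` into two members of `D`, recorded by the first factor. -/
def factorizations (D : Finset A) (b : A) : Finset A := D.filter fun a ↦ a⁻¹ * b ∈ D

/-- A Sidon set: products of pairs determine the pair up to order. -/
def IsSidon (D : Finset A) : Prop :=
  ∀ ⦃a b c d⦄, a ∈ D → b ∈ D → c ∈ D → d ∈ D → a * b = c * d → a = c ∨ a = d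

variable {D : Finset A}

lemma isSidon_of_card_filter_le_one
    (h : ∀ g : A, g ≠ 1 → (D.filter fun a ↦ g * a ∈ D).card ≤ 1) : IsSidon D := by
  intro a b c d ha hb hc hd hprod
  by_contra! hne
  have hg : c * a⁻¹ ≠ 1 := fun h ↦ hne.1 (mul_inv_eq_one.1 h).symm
  have hd' : c * a⁻¹ * d = b := by rw [mul_right_comm, ← hprod, mul_inv_cancel_comm]
  refine hne.2 (Finset.card_le_one.1 (h _ hg) a ?_ d ?_)
  · simp [ha, hc]
  · simp [hd', hb, hd]

lemma mem_factorizations {a b : A} : a ∈ factorizations D b ↔ a ∈ D ∧ a⁻¹ * b ∈ D := by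
  simp [factorizations]

lemma IsSidon.factorizations_eq (hD : IsSidon D) {a b : A} (ha : a ∈ factorizations D b) :
    factorizations D b = {a, a⁻¹ * b} := by
  obtain ⟨haD, hab⟩ := mem_factorizations.1 ha
  ext c
  simp only [mem_factorizations, Finset.mem_insert, Finset.mem_singleton]
  constructor
  · rintro ⟨hc, hcb⟩
    exact hD hc hcb haD hab (by simp)
  · rintro (rfl | rfl)
    · exact ⟨haD, hab⟩
    · simpa using ⟨hab, haD⟩

lemma IsSidon.card_factorizations_le (hD : IsSidon D) (b : A) :
    (factorizations D b).card ≤ 2 := by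
  rcases (factorizations D b).eq_empty_or_nonempty with h | ⟨a, ha⟩
  · simp [h]
  · rw [hD.factorizations_eq ha]
    exact Finset.card_le_two

lemma IsSidon.card_factorizations_eq_one_iff (hD : IsSidon D) {b : A} :
    (factorizations D b).card = 1 ↔ ∃ a ∈ D, a * a = b := by
  constructor
  · intro h
    obtain ⟨a, ha⟩ := Finset.card_pos.1 (h ▸ one_pos)
    refine ⟨a, (mem_factorizations.1 ha).1, ?_⟩
    by_contra hne
    rw [hD.factorizations_eq ha, Finset.card_pair fun h ↦ hne (eq_inv_mul_iff_mul_eq.1 h)] at h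
    omega
  · rintro ⟨a, ha, rfl⟩
    rw [hD.factorizations_eq (a := a) (mem_factorizations.2 (by simpa using ha))]
    simp

variable [Fintype A]

/-- The elements of `A` having exactly `n` ordered factorizations into two members of `D`. -/
def factorizationLevel (D : Finset A) (n : ℕ) : Finset A :=
  Finset.univ.filter fun b ↦ (factorizations D b).card = n

lemma mem_factorizationLevel {n : ℕ} {b : A} :
    b ∈ factorizationLevel D n ↔ (factorizations D b).card = n := by
  simp [factorizationLevel]

lemma IsSidon.indicatorSum_mul_self (hD : IsSidon D) :
    indicatorSum D * indicatorSum D = indicatorSum (factorizationLevel D 1) +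
      (2 : ℤ) • indicatorSum (factorizationLevel D 2) := by
  ext b
  have hle := hD.card_factorizations_le b
  simp only [coeff_indicatorSum_mul_self, MonoidAlgebra.coeff_add, MonoidAlgebra.coeff_smul,
    Finsupp.add_apply, Finsupp.smul_apply, coeff_indicatorSum, mem_factorizationLevel]
  rw [← factorizations]
  interval_cases (factorizations D b).card <;> simp

lemma IsSidon.indicatorSum_univ_eq (hD : IsSidon D) :
    indicatorSum Finset.univ = indicatorSum (factorizationLevel D 0) +
      indicatorSum (factorizationLevel D 1) + indicatorSum (factorizationLevel D 2) := by
  ext b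
  have hle := hD.card_factorizations_le b
  simp only [MonoidAlgebra.coeff_add, Finsupp.add_apply, coeff_indicatorSum,
    mem_factorizationLevel, Finset.mem_univ]
  interval_cases (factorizations D b).card <;> simp

end SidonSet

section PlanarDifferenceSet

variable {A : Type*} [CommGroup A] [DecidableEq A]

/-- A planar difference set of order `q`: every `g ≠ 1` is a quotient of two elements of `D` in
exactly one way. -/
structure IsPlanarDifferenceSet (D : Finset A) (q : ℕ) : Prop where
  card_eq : D.card = q + 1
  card_filter_eq : ∀ g : A, g ≠ 1 → (D.filter fun a ↦ g * a ∈ D).card = 1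

variable {D : Finset A} {q : ℕ}

lemma IsPlanarDifferenceSet.isSidon (hD : IsPlanarDifferenceSet D q) : IsSidon D :=
  isSidon_of_card_filter_le_one fun g hg ↦ (hD.card_filter_eq g hg).le

lemma IsPlanarDifferenceSet.factorizationLevel_one [Fintype A] (hD : IsPlanarDifferenceSet D q)
    (hsq : ∀ c, c ∈ D ↔ ∃ a ∈ D, a * a = c) : factorizationLevel D 1 = D := by
  ext c
  rw [mem_factorizationLevel, hD.isSidon.card_factorizations_eq_one_iff, hsq]

variable [Fintype A]

namespace IsPlanarDifferenceSet

lemma mul_inversion (hD : IsPlanarDifferenceSet D q) :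
    indicatorSum D * inversion (indicatorSum D) =
      (q : MonoidAlgebra ℤ A) + indicatorSum Finset.univ := by
  ext g
  rw [coeff_mul_inversion_indicatorSum]
  simp only [coeff_indicatorSum, Finset.sum_boole]
  rcases eq_or_ne g 1 with rfl | hg
  · simp [coeff_indicatorSum, hD.card_eq]
  · simp [coeff_indicatorSum, hD.card_filter_eq g hg, hg.symm]

lemma mul_univ (hD : IsPlanarDifferenceSet D q) :
    indicatorSum D * indicatorSum Finset.univ =
      (q + 1 : MonoidAlgebra ℤ A) * indicatorSum Finset.univ := by
  rw [indicatorSum_mul_univ, hD.card_eq, Nat.cast_add, Nat.cast_one]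

lemma inversion_mul_univ (hD : IsPlanarDifferenceSet D q) :
    inversion (indicatorSum D) * indicatorSum Finset.univ =
      (q + 1 : MonoidAlgebra ℤ A) * indicatorSum Finset.univ := by
  simpa [inversion_indicatorSum_univ] using congrArg inversion hD.mul_univ

lemma univ_mul_univ (hD : IsPlanarDifferenceSet D q) :
    indicatorSum Finset.univ * indicatorSum Finset.univ =
      (q ^ 2 + q + 1 : MonoidAlgebra ℤ A) * indicatorSum Finset.univ := by
  linear_combination (q + 1 : MonoidAlgebra ℤ A) * hD.mul_univ +
    indicatorSum D * hD.inversion_mul_univ - indicatorSum Finset.univ * hD.mul_inversion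

lemma card_univ (hD : IsPlanarDifferenceSet D q) : Fintype.card A = q ^ 2 + q + 1 := by
  have h : (Fintype.card A : ℤ) • indicatorSum (Finset.univ : Finset A) =
      (q ^ 2 + q + 1 : ℤ) • indicatorSum Finset.univ := by
    simp only [zsmul_eq_mul]
    push_cast
    rw [← hD.univ_mul_univ, indicatorSum_mul_univ, Finset.card_univ]
  have hcoeff := congrArg (fun x ↦ x.coeff 1) h
  simp only [MonoidAlgebra.coeff_smul, Finsupp.smul_apply, coeff_indicatorSum, Finset.mem_univ,
    if_true, smul_eq_mul, mul_one] at hcoeff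
  exact_mod_cast hcoeff

end IsPlanarDifferenceSet

/-- The element `q D - ∑ a, a` of `ℤ[A]`, which is the universal Gauss sum when `D` is the Singer
set over a field of order `q` (see `universalGaussSum_scalarClass`). -/
def gaussElement (D : Finset A) (q : ℕ) : MonoidAlgebra ℤ A :=
  (q : MonoidAlgebra ℤ A) * indicatorSum D - indicatorSum Finset.univ

namespace IsPlanarDifferenceSet

lemma gaussElement_mul_univ (hD : IsPlanarDifferenceSet D q) :
    gaussElement D q * indicatorSum Finset.univ = -indicatorSum Finset.univ := by
  rw [gaussElement]
  linear_combination (q : MonoidAlgebra ℤ A) * hD.mul_univ - hD.univ_mul_univ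

lemma gaussElement_mul_inversion (hD : IsPlanarDifferenceSet D q) :
    gaussElement D q * inversion (indicatorSum D) =
      (q : MonoidAlgebra ℤ A) ^ 2 - indicatorSum Finset.univ := by
  rw [gaussElement]
  linear_combination (q : MonoidAlgebra ℤ A) * hD.mul_inversion - hD.inversion_mul_univ

lemma gaussElement_pow_three_mul_inversion (hD : IsPlanarDifferenceSet D q) :
    gaussElement D q ^ 3 * inversion (indicatorSum D) =
      (q ^ 4 : ℤ) • (indicatorSum D * indicatorSum D) -
        (q ^ 4 + q ^ 3 - q ^ 2 + 1 : ℤ) • indicatorSum Finset.univ := by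
  have hsq : gaussElement D q ^ 2 = (q : MonoidAlgebra ℤ A) ^ 2 * indicatorSum D ^ 2 -
      (q ^ 2 + q - 1 : MonoidAlgebra ℤ A) * indicatorSum Finset.univ := by
    rw [gaussElement]
    linear_combination (-2 * q : MonoidAlgebra ℤ A) * hD.mul_univ + hD.univ_mul_univ
  simp only [zsmul_eq_mul]
  push_cast
  linear_combination gaussElement D q ^ 2 * hD.gaussElement_mul_inversion +
    (q : MonoidAlgebra ℤ A) ^ 2 * hsq - (gaussElement D q - 1) * hD.gaussElement_mul_univ

lemma gaussElement_pow_three_mul_inversion_mul_self (hD : IsPlanarDifferenceSet D q) :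
    gaussElement D q ^ 3 * (inversion (indicatorSum D) * inversion (indicatorSum D)) =
      (q ^ 5 : ℤ) • indicatorSum D -
        (q ^ 4 - q ^ 2 + q + 1 : ℤ) • indicatorSum Finset.univ := by
  have hexpand : gaussElement D q ^ 3 * (inversion (indicatorSum D) * inversion (indicatorSum D)) =
      gaussElement D q * ((q : MonoidAlgebra ℤ A) ^ 2 - indicatorSum Finset.univ) ^ 2 := by
    rw [← hD.gaussElement_mul_inversion]
    ring
  rw [hexpand]
  simp only [zsmul_eq_mul]
  push_cast
  have hdef : gaussElement D q =
    (q : MonoidAlgebra ℤ A) * indicatorSum D - indicatorSum Finset.univ := rfl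
  linear_combination (q : MonoidAlgebra ℤ A) ^ 4 * hdef + gaussElement D q * hD.univ_mul_univ +
    (-(q : MonoidAlgebra ℤ A) ^ 2 + q + 1) * hD.gaussElement_mul_univ

theorem coeff_gaussElement_pow_three_mul_level_one (hD : IsPlanarDifferenceSet D q)
    (hsq : ∀ c, c ∈ D ↔ ∃ a ∈ D, a * a = c) (b : A) :
    (gaussElement D q ^ 3 * inversion (indicatorSum (factorizationLevel D 1))).coeff b =
      q ^ 4 * (factorizations D b).card - (q ^ 4 + q ^ 3 - q ^ 2 + 1) := by
  rw [hD.factorizationLevel_one hsq, hD.gaussElement_pow_three_mul_inversion]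
  simp only [MonoidAlgebra.coeff_sub, MonoidAlgebra.coeff_smul, Finsupp.sub_apply,
    Finsupp.smul_apply, coeff_indicatorSum_mul_self, coeff_indicatorSum, Finset.mem_univ, if_true,
    smul_eq_mul, mul_one, factorizations]

theorem two_mul_coeff_gaussElement_pow_three_mul_level_two (hD : IsPlanarDifferenceSet D q)
    (hsq : ∀ c, c ∈ D ↔ ∃ a ∈ D, a * a = c) (b : A) :
    2 * (gaussElement D q ^ 3 * inversion (indicatorSum (factorizationLevel D 2))).coeff b =
      (if (factorizations D b).card = 1 then (q ^ 5 : ℤ) else 0) -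
        q ^ 4 * (factorizations D b).card + (q ^ 3 - q) := by
  have hinv := congrArg inversion hD.isSidon.indicatorSum_mul_self
  rw [map_mul, map_add, map_zsmul] at hinv
  have hcoeff := congrArg (fun x ↦ (gaussElement D q ^ 3 * x).coeff b) hinv
  simp only [hD.gaussElement_pow_three_mul_inversion_mul_self, mul_add, mul_smul_comm,
    MonoidAlgebra.coeff_add, MonoidAlgebra.coeff_sub, MonoidAlgebra.coeff_smul, Finsupp.add_apply,
    Finsupp.sub_apply, Finsupp.smul_apply, coeff_indicatorSum, Finset.mem_univ, if_true,
    smul_eq_mul, mul_one, coeff_gaussElement_pow_three_mul_level_one hD hsq] at hcoeff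
  have hmem : b ∈ D ↔ (factorizations D b).card = 1 := by
    rw [← mem_factorizationLevel, hD.factorizationLevel_one hsq]
  simp only [hmem, mul_ite, mul_one, mul_zero] at hcoeff
  linarith

theorem coeff_gaussElement_pow_three_mul_level_add (hD : IsPlanarDifferenceSet D q)
    (b : A) :
    (gaussElement D q ^ 3 * inversion (indicatorSum (factorizationLevel D 0))).coeff b +
      (gaussElement D q ^ 3 * inversion (indicatorSum (factorizationLevel D 1))).coeff b +
      (gaussElement D q ^ 3 * inversion (indicatorSum (factorizationLevel D 2))).coeff b = -1 := by
  have huniv : gaussElement D q ^ 3 * inversion (indicatorSum Finset.univ) =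
      -indicatorSum Finset.univ := by
    rw [inversion_indicatorSum_univ]
    linear_combination
      (gaussElement D q ^ 2 - gaussElement D q + 1) * hD.gaussElement_mul_univ
  have hcoeff := congrArg (fun x ↦ x.coeff b) huniv
  rw [hD.isSidon.indicatorSum_univ_eq, map_add, map_add, mul_add, mul_add,
    ← hD.isSidon.indicatorSum_univ_eq] at hcoeff
  simpa [coeff_indicatorSum] using hcoeff

end IsPlanarDifferenceSet

end PlanarDifferenceSet

section FiniteField

lemma compAddMonoidHom_trace_ne_one {K L R : Type*} [Field K] [Field L] [Finite K] [Finite L]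
    [Algebra K L] [CommMonoid R] {ψ : AddChar K R} (hψ : ψ ≠ 1) :
    ψ.compAddMonoidHom (Algebra.trace K L : L →+ K) ≠ 1 := fun h ↦
  hψ <| AddChar.compAddMonoidHom_injective_left (Algebra.trace K L : L →+ K)
    (Algebra.trace_surjective K L) h

lemma trace_zmod_trace {p : ℕ} [Fact p.Prime] {K L : Type*} [Field K] [Field L] [Finite L]
    [Algebra (ZMod p) K] [Algebra (ZMod p) L] [Algebra K L] (x : L) :
    Algebra.trace (ZMod p) K (Algebra.trace K L x) = Algebra.trace (ZMod p) L x := by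
  have : IsScalarTower (ZMod p) K L := IsScalarTower.of_algebraMap_eq' (Subsingleton.elim _ _)
  have : Finite K := Finite.of_injective _ (algebraMap K L).injective
  exact Algebra.trace_trace x

lemma trace_pow_char {E F : Type*} [Field E] [Field F] [Algebra E F] [Finite F] (p : ℕ)
    [Fact p.Prime] [CharP E p] (x : F) :
    Algebra.trace E F (x ^ p) = Algebra.trace E F x ^ p := by
  have : CharP F p := charP_of_injective_algebraMap (algebraMap E F).injective p
  apply (algebraMap E F).injective
  simp_rw [map_pow, FiniteField.algebraMap_trace_eq_sum_pow, sum_pow_char, ← pow_mul, mul_comm]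

lemma trace_pow_card_add_one {E F : Type*} [Field E] [Field F] [Algebra E F] [Fintype E] [Finite F]
    (h3 : Module.finrank E F = 3) (x : F) :
    Algebra.trace E F (x ^ (Fintype.card E + 1)) = Algebra.norm E x * Algebra.trace E F x⁻¹ := by
  have := Fintype.ofFinite F
  rcases eq_or_ne x 0 with rfl | hx
  · simp
  have hpow : x ^ Fintype.card E ^ 3 = x := by
    rw [← h3, ← Module.card_eq_pow_finrank, FiniteField.pow_card]
  apply (algebraMap E F).injective
  rw [map_mul, FiniteField.algebraMap_trace_eq_sum_pow, FiniteField.algebraMap_trace_eq_sum_pow,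
    FiniteField.algebraMap_norm_eq_prod_pow, h3]
  simp only [Nat.card_eq_fintype_card, Finset.sum_range_succ, Finset.prod_range_succ,
    Finset.sum_range_zero, Finset.prod_range_zero, pow_zero, pow_one, zero_add, one_mul, inv_pow]
  generalize Fintype.card E = q at *
  have h1 : (x ^ (q + 1)) ^ q = x ^ q * x ^ q ^ 2 := by ring
  have h2 : (x ^ (q + 1)) ^ q ^ 2 = x ^ q ^ 2 * x := by
    rw [← pow_mul, show (q + 1) * q ^ 2 = q ^ 2 + q ^ 3 by ring, pow_add, hpow]
  rw [h1, h2]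
  field_simp
  ring

lemma finrank_eq_of_card_eq_pow {K L : Type*} [Field K] [Field L] [Algebra K L] [Fintype K]
    [Fintype L] {n : ℕ} (h : Fintype.card L = Fintype.card K ^ n) : Module.finrank K L = n :=
  Nat.pow_right_injective Fintype.one_lt_card ((Module.card_eq_pow_finrank).symm.trans h)

lemma algebraMap_norm_of_finrank_eq_three {F H : Type*} [Field F] [Field H] [Fintype F] [Finite H]
    [Algebra F H] (h3 : Module.finrank F H = 3) (x : H) :
    algebraMap F H (Algebra.norm F x) = x ^ (1 + Fintype.card F + Fintype.card F ^ 2) := by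
  rw [FiniteField.algebraMap_norm_eq_prod_pow, h3, Nat.card_eq_fintype_card]
  simp only [Finset.prod_range_succ, Finset.prod_range_zero]
  ring

lemma exists_intermediateField_card_eq {p : ℕ} [Fact p.Prime] {F : Type*} [Field F] [Fintype F]
    [Algebra (ZMod p) F] {s n : ℕ} (hs : s ≠ 0) (hF : Fintype.card F = p ^ (n * s)) :
    ∃ E : IntermediateField (ZMod p) F, Nat.card E = p ^ s := by
  have hrank : Module.finrank (ZMod p) F = n * s :=
    finrank_eq_of_card_eq_pow (by rw [hF, ZMod.card])
  have hdvd : Module.finrank (ZMod p) (GaloisField p s) ∣ Module.finrank (ZMod p) F := by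
    rw [hrank, GaloisField.finrank p hs]
    exact Dvd.intro_left n rfl
  obtain ⟨φ⟩ := FiniteField.nonempty_algHom_of_finrank_dvd hdvd
  refine ⟨φ.fieldRange, ?_⟩
  rw [← GaloisField.card p s hs]
  exact (Nat.card_congr (AlgEquiv.ofInjectiveField φ).toEquiv).symm

lemma exists_units_generator {K : Type*} [Field K] [Fintype K] (hK : 2 < Fintype.card K) {β : K}
    (hβ : ∀ x : K, x ≠ 0 → ∃ n : ℕ, x = β ^ n) :
    ∃ b : Kˣ, (b : K) = β ∧ ∀ v, v ∈ Subgroup.zpowers b := by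
  classical
  have hβ0 : β ≠ 0 := by
    rintro rfl
    obtain ⟨x, -, hx⟩ := Finset.exists_mem_notMem_of_card_lt_card
      (s := ({0, 1} : Finset K)) (t := Finset.univ) (Finset.card_le_two.trans_lt hK)
    simp only [Finset.mem_insert, Finset.mem_singleton, not_or] at hx
    obtain ⟨n, hn⟩ := hβ x hx.1
    rcases n with - | n
    · exact hx.2 (hn.trans (pow_zero _))
    · exact hx.1 (hn.trans (zero_pow n.succ_ne_zero))
  refine ⟨Units.mk0 β hβ0, rfl, fun v ↦ ?_⟩
  obtain ⟨n, hn⟩ := hβ v v.ne_zero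
  exact ⟨n, Units.ext (by simpa using hn.symm)⟩

end FiniteField

open scoped Classical in
lemma sum_eq_add_sum_units {G R : Type*} [GroupWithZero G] [Fintype G] [AddCommMonoid R]
    (f : G → R) : ∑ x, f x = f 0 + ∑ u : Gˣ, f u := by
  rw [Fintype.sum_eq_add_sum_subtype_ne f 0]
  exact congrArg _ (Equiv.sum_comp unitsEquivNeZero fun x : {x : G // x ≠ 0} ↦ f x).symm

section UniversalGaussSum

open MonoidAlgebra
open scoped Classical

variable {F A : Type*} [Field F] [CommGroup A]

/-- The multiplicative character of `F` with values in the group ring `ℤ[A]` attached to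
`π : Fˣ →* A`; every character factoring through `π` is a specialization of it. -/
def universalMulChar (π : Fˣ →* A) : MulChar F (MonoidAlgebra ℤ A) :=
  MulChar.ofUnitHom ((MonoidAlgebra.of ℤ A).comp π).toHomUnits

lemma universalMulChar_coe (π : Fˣ →* A) (u : Fˣ) :
    universalMulChar π u = single (π u) 1 := by
  rw [universalMulChar, MulChar.ofUnitHom_coe]
  rfl

/-- The Gauss sum of the universal character `universalMulChar π`. -/
def universalGaussSum [Fintype F] (π : Fˣ →* A) (ψ : AddChar F ℤ) : MonoidAlgebra ℤ A :=
  ∑ u : Fˣ, single (π u) (ψ u)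

variable [Fintype F] (π : Fˣ →* A) (ψ : AddChar F ℤ)

lemma coeff_universalGaussSum [DecidableEq A] (a : A) :
    (universalGaussSum π ψ).coeff a = ∑ u : Fˣ with π u = a, ψ u := by
  simp [universalGaussSum, coeff_sum, Finsupp.single_apply, Finset.sum_apply', Finset.sum_filter]

lemma coeff_universalGaussSum_mul_inversion [DecidableEq A] (S : Finset A) (u : Fˣ) :
    (universalGaussSum π ψ * inversion (indicatorSum S)).coeff (π u) =
      ∑ v : Fˣ with π v ∈ S, ψ (u * v) := by
  rw [coeff_mul_inversion_indicatorSum,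
    ← Finset.sum_fiberwise_of_maps_to (s := Finset.univ.filter (π · ∈ S)) (g := π) (t := S)
      (by simp)]
  refine Finset.sum_congr rfl fun a ha ↦ ?_
  rw [coeff_universalGaussSum, Finset.sum_filter, Finset.filter_filter, Finset.sum_filter,
    ← Equiv.sum_comp (Equiv.mulLeft u)]
  refine Finset.sum_congr rfl fun v _ ↦ ?_
  have hiff : π u * π v = π u * a ↔ π v ∈ S ∧ π v = a :=
    mul_right_inj (π u) |>.trans ⟨fun h ↦ ⟨h ▸ ha, h⟩, And.right⟩
  simp [hiff]

theorem universalGaussSum_comp_norm (hψ : ψ ≠ 1) (K : Type*) [Field K] [Fintype K]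
    [Algebra F K] :
    universalGaussSum (π.comp (Units.map (Algebra.norm F)))
        (ψ.compAddMonoidHom (Algebra.trace F K : K →+ F)) =
      (-1) ^ (Module.finrank F K + 1) * universalGaussSum π ψ ^ Module.finrank F K := by
  set Ψ : AddChar F (MonoidAlgebra ℤ A) :=
    (algebraMap ℤ (MonoidAlgebra ℤ A)).toMonoidHom.compAddChar ψ
  have hterm (u : Fˣ) (c : ℤ) :
      universalMulChar π u * algebraMap ℤ (MonoidAlgebra ℤ A) c = single (π u) c := by
    rw [universalMulChar_coe, ← Algebra.commutes, ← Algebra.smul_def, smul_single, smul_eq_mul,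
      mul_one]
  have hgauss : gaussSum (universalMulChar π) Ψ = universalGaussSum π ψ := by
    rw [gaussSum, sum_eq_add_sum_units, MulChar.map_zero, zero_mul, zero_add]
    exact Finset.sum_congr rfl fun u _ ↦ hterm u _
  have hsum : ∑ x, Ψ x = 0 := by
    rw [← map_zero (algebraMap ℤ (MonoidAlgebra ℤ A)), ← AddChar.sum_eq_zero_of_ne_one hψ, map_sum]
    rfl
  rw [← hgauss, ← davenport_hasse _ _ hsum, sum_eq_add_sum_units, Algebra.norm_zero,
    MulChar.map_zero, zero_mul, zero_add]
  exact Finset.sum_congr rfl fun u _ ↦ (hterm (Units.map (Algebra.norm F) u) _).symm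

end UniversalGaussSum

section ScalarClass

open scoped Classical

variable (E F : Type*) [Field E] [Field F] [Algebra E F]

/-- The group `Fˣ / Eˣ`, whose elements are the points of the projective space of `F` over `E`. -/
def ScalarClass : Type _ := Fˣ ⧸ (Units.map (algebraMap E F : E →* F)).range

instance : CommGroup (ScalarClass E F) :=
  inferInstanceAs (CommGroup (Fˣ ⧸ (Units.map (algebraMap E F : E →* F)).range))

instance [Finite F] : Fintype (ScalarClass E F) :=
  have : Finite (ScalarClass E F) := inferInstanceAs (Finite (Fˣ ⧸ _))
  Fintype.ofFinite _

variable {F}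

/-- The projection `Fˣ →* Fˣ / Eˣ`. -/
def scalarClass : Fˣ →* ScalarClass E F :=
  QuotientGroup.mk' (Units.map (algebraMap E F : E →* F)).range

lemma scalarClass_surjective : Function.Surjective (scalarClass E : Fˣ → ScalarClass E F) :=
  QuotientGroup.mk'_surjective _

variable {E}

lemma scalarClass_eq_iff {u v : Fˣ} :
    scalarClass E u = scalarClass E v ↔ ∃ c : Eˣ, v = algebraMap E F c * u := by
  refine QuotientGroup.eq.trans (exists_congr fun c ↦ ?_)
  rw [eq_inv_mul_iff_mul_eq, Units.ext_iff, mul_comm, eq_comm]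
  rfl

lemma finrank_span_one_pair (u : Fˣ) :
    Module.finrank E (Submodule.span E {1, (u : F)}) = if scalarClass E u = 1 then 1 else 2 := by
  split_ifs with h
  · obtain ⟨c, hc⟩ := scalarClass_eq_iff.1 ((map_one _).trans h.symm)
    have : Submodule.span E {1, (u : F)} = Submodule.span E {1} := by
      rw [Set.pair_comm]
      refine Submodule.span_insert_eq_span (Submodule.mem_span_singleton.2 ⟨c, ?_⟩)
      rw [hc, Algebra.smul_def, Units.val_one]
    rw [this, finrank_span_singleton one_ne_zero]
  · have hlin : LinearIndependent E ![(1 : F), u] := by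
      refine (LinearIndependent.pair_iff' one_ne_zero).2 fun c hc ↦ h ?_
      rw [eq_comm, ← map_one (scalarClass E)]
      refine scalarClass_eq_iff.2 ⟨Units.mk0 c ?_, ?_⟩
      · rintro rfl
        exact u.ne_zero (by rw [← hc, zero_smul])
      · simp [← hc, Algebra.smul_def]
    rw [← Matrix.range_cons_cons_empty 1 (u : F) ![], finrank_span_eq_card hlin, Fintype.card_fin]

lemma ncard_preimage_scalarClass [Fintype E] (S : Set (ScalarClass E F)) :
    (scalarClass E ⁻¹' S).ncard = (Fintype.card E - 1) * S.ncard := by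
  have hinj : Function.Injective (Units.map (algebraMap E F : E →* F)) :=
    Units.map_injective (algebraMap E F).injective
  have h := QuotientGroup.card_preimage_mk (Units.map (algebraMap E F : E →* F)).range S
  rwa [← Nat.card_congr (MonoidHom.ofInjective hinj).toEquiv,
    Nat.card_eq_fintype_card (α := Eˣ), Fintype.card_units] at h

variable [Fintype F]

variable (E F) in
/-- The Singer set of `F / E`: the hyperplane of trace-zero points. -/
def singerSet : Finset (ScalarClass E F) :=
  Finset.univ.filter fun c ↦ ∃ u : Fˣ, scalarClass E u = c ∧ Algebra.trace E F u = 0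

lemma scalarClass_mem_singerSet {u : Fˣ} :
    scalarClass E u ∈ singerSet E F ↔ Algebra.trace E F u = 0 := by
  simp only [singerSet, Finset.mem_filter, Finset.mem_univ, true_and]
  refine ⟨?_, fun h ↦ ⟨u, rfl, h⟩⟩
  rintro ⟨v, hvu, hv⟩
  obtain ⟨c, hc⟩ := scalarClass_eq_iff.1 hvu
  rw [hc, ← Algebra.smul_def, map_smul, hv, smul_zero]

lemma mem_singerSet_iff_exists_mul_self [CharP E 2] {c : ScalarClass E F} :
    c ∈ singerSet E F ↔ ∃ a ∈ singerSet E F, a * a = c := by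
  have : CharP F 2 := charP_of_injective_algebraMap (algebraMap E F).injective 2
  obtain ⟨u, rfl⟩ := scalarClass_surjective E c
  constructor
  · intro hu
    obtain ⟨x, hx⟩ := (bijective_frobenius F 2).2 u
    rw [frobenius_def] at hx
    have hx0 : x ≠ 0 := fun h ↦ u.ne_zero (by rw [← hx, h, zero_pow two_ne_zero])
    refine ⟨scalarClass E (Units.mk0 x hx0), scalarClass_mem_singerSet.2 ?_, ?_⟩
    · rw [Units.val_mk0, ← sq_eq_zero_iff, ← trace_pow_char, hx, scalarClass_mem_singerSet.1 hu]
    · rw [← map_mul, ← sq]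
      exact congrArg _ (Units.ext hx)
  · rintro ⟨a, ha, hac⟩
    obtain ⟨v, rfl⟩ := scalarClass_surjective E a
    rw [← hac, ← map_mul, scalarClass_mem_singerSet, Units.val_mul, ← sq, trace_pow_char,
      scalarClass_mem_singerSet.1 ha, zero_pow two_ne_zero]

variable [Fintype E]

lemma sum_filter_scalarClass_eq {R : Type*} [AddCommMonoid R] (f : F → R) (u : Fˣ) :
    ∑ v : Fˣ with scalarClass E v = scalarClass E u, f v = ∑ c : Eˣ, f (algebraMap E F c * u) := by
  refine (Finset.sum_nbij (fun c : Eˣ ↦ Units.map (algebraMap E F : E →* F) c * u) ?_ ?_ ?_ ?_).symm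
  · intro c _
    exact Finset.mem_filter.2 ⟨Finset.mem_univ _, (scalarClass_eq_iff.2 ⟨c, rfl⟩).symm⟩
  · intro c _ d _ h
    exact Units.map_injective (algebraMap E F).injective (mul_right_cancel h)
  · intro v hv
    obtain ⟨c, hc⟩ := scalarClass_eq_iff.1 (Finset.mem_filter.1 hv).2.symm
    exact ⟨c, Finset.mem_coe.2 (Finset.mem_univ _), Units.ext hc.symm⟩
  · simp

lemma universalGaussSum_scalarClass {ψ : AddChar E ℤ} (hψ : ψ ≠ 1) :
    universalGaussSum (scalarClass E) (ψ.compAddMonoidHom (Algebra.trace E F : F →+ E)) =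
      gaussElement (singerSet E F) (Fintype.card E) := by
  ext c
  have hcoeff : (gaussElement (singerSet E F) (Fintype.card E)).coeff c =
      (if c ∈ singerSet E F then (Fintype.card E : ℤ) else 0) - 1 := by
    simp [gaussElement, coeff_indicatorSum, ← nsmul_eq_mul]
  rw [hcoeff]
  obtain ⟨u, rfl⟩ := scalarClass_surjective E c
  have hunits : ∑ c : Eˣ, ψ (c * Algebra.trace E F u) =
      (if Algebra.trace E F u = 0 then (Fintype.card E : ℤ) else 0) - 1 := by
    have hsum := AddChar.sum_mulShift (Algebra.trace E F u) (.of_ne_one hψ)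
    rw [sum_eq_add_sum_units, zero_mul, AddChar.map_zero_eq_one, Nat.cast_ite,
      Nat.cast_zero] at hsum
    exact eq_sub_of_add_eq' hsum
  rw [coeff_universalGaussSum]
  refine (sum_filter_scalarClass_eq (E := E)
    (ψ.compAddMonoidHom (Algebra.trace E F : F →+ E)) u).trans ?_
  have htrace (c : Eˣ) : Algebra.trace E F (algebraMap E F c * u) = c * Algebra.trace E F u := by
    rw [← Algebra.smul_def, map_smul, smul_eq_mul]
  simp [htrace, hunits, scalarClass_mem_singerSet]

end ScalarClass

section SingerDifferenceSet

open scoped Classical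

variable {E F : Type*} [Field E] [Field F] [Algebra E F] [Fintype E]

lemma ncard_traceForm_orthogonal [Finite F] (W : Submodule E F) :
    {u : Fˣ | ∀ w ∈ W, Algebra.trace E F (w * u) = 0}.ncard =
      Fintype.card E ^ (Module.finrank E F - Module.finrank E W) - 1 := by
  set B := Algebra.traceForm E F
  have himage : Units.val '' {u : Fˣ | ∀ w ∈ W, Algebra.trace E F (w * u) = 0} =
      (B.orthogonal W : Set F) \ {0} := by
    ext x
    constructor
    · rintro ⟨u, hu, rfl⟩
      exact ⟨hu, u.ne_zero⟩
    · rintro ⟨hx, hx0⟩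
      exact ⟨Units.mk0 x hx0, hx, rfl⟩
  rw [← Set.ncard_image_of_injective _ Units.val_injective, himage,
    Set.ncard_sdiff_singleton_of_mem (zero_mem (B.orthogonal W)), ← Nat.card_coe_set_eq,
    SetLike.coe_sort_coe, Module.natCard_eq_pow_finrank (K := E),
    LinearMap.BilinForm.finrank_orthogonal (traceForm_nondegenerate E F), Nat.card_eq_fintype_card]

variable [Fintype F]

lemma card_filter_mul_mem_singerSet (h3 : Module.finrank E F = 3) (g : ScalarClass E F) :
    ((singerSet E F).filter fun a ↦ g * a ∈ singerSet E F).card =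
      if g = 1 then Fintype.card E + 1 else 1 := by
  obtain ⟨u, rfl⟩ := scalarClass_surjective E g
  have hq : 1 < Fintype.card E := Fintype.one_lt_card
  have hpre : scalarClass E ⁻¹'
      ((singerSet E F).filter fun a ↦ scalarClass E u * a ∈ singerSet E F) =
      {v : Fˣ | ∀ w ∈ Submodule.span E {1, (u : F)}, Algebra.trace E F (w * v) = 0} := by
    ext v
    have hspan : (∀ w ∈ Submodule.span E {1, (u : F)}, Algebra.trace E F (w * v) = 0) ↔ _ :=
      Submodule.span_le (p := LinearMap.ker ((Algebra.traceForm E F).flip v))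
    rw [Set.mem_preimage, Finset.mem_coe, Finset.mem_filter, ← map_mul,
      scalarClass_mem_singerSet, scalarClass_mem_singerSet]
    simp [hspan, Set.insert_subset_iff]
  refine Nat.eq_of_mul_eq_mul_left (Nat.sub_pos_of_lt hq) ?_
  rw [← Set.ncard_coe_finset, ← ncard_preimage_scalarClass, hpre, ncard_traceForm_orthogonal, h3,
    finrank_span_one_pair]
  split_ifs
  · zify [hq.le, Nat.one_le_pow 2 _ hq.le]
    ring
  · simp

theorem isPlanarDifferenceSet_singerSet (h3 : Module.finrank E F = 3) :
    IsPlanarDifferenceSet (singerSet E F) (Fintype.card E) where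
  card_eq := by simpa using card_filter_mul_mem_singerSet h3 1
  card_filter_eq g hg := by rw [card_filter_mul_mem_singerSet h3, if_neg hg]

end SingerDifferenceSet

section NormTower

open scoped Classical

variable {E F H : Type*} [Field E] [Field F] [Field H] [Algebra E F] [Algebra F H]
  [Fintype E] [Fintype F]

lemma sum_scalarClass_norm_mem [Fintype H] {ψ : AddChar E ℤ} (hψ : ψ ≠ 1)
    (S : Finset (ScalarClass E F)) (u : Hˣ) :
    ∑ v : Hˣ with scalarClass E (Units.map (Algebra.norm F) v) ∈ S,
        ψ (Algebra.trace E F (Algebra.trace F H (u * v))) =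
      ((-1) ^ (Module.finrank F H + 1) *
        gaussElement (singerSet E F) (Fintype.card E) ^ Module.finrank F H *
          inversion (indicatorSum S)).coeff (scalarClass E (Units.map (Algebra.norm F) u)) := by
  rw [← universalGaussSum_scalarClass hψ,
    ← universalGaussSum_comp_norm _ _ (compAddMonoidHom_trace_ne_one hψ)]
  exact (coeff_universalGaussSum_mul_inversion ((scalarClass E).comp (Units.map (Algebra.norm F)))
    ((ψ.compAddMonoidHom (Algebra.trace E F : F →+ E)).compAddMonoidHom
      (Algebra.trace F H : H →+ F)) S u).symm

lemma scalarClass_inv_mem_factorizations (h3 : Module.finrank E F = 3) (u y : Fˣ) :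
    scalarClass E u⁻¹ ∈ factorizations (singerSet E F) (scalarClass E y) ↔
      Algebra.trace E F (u ^ (Fintype.card E + 1)) = 0 ∧ Algebra.trace E F (y * u) = 0 := by
  rw [mem_factorizations, ← map_inv, ← map_mul, scalarClass_mem_singerSet,
    scalarClass_mem_singerSet, trace_pow_card_add_one h3, mul_eq_zero_iff_left, inv_inv, mul_comm u]
  · simp
  · exact Algebra.norm_ne_zero_iff.2 u.ne_zero

lemma ncard_trace_eq_zero (h3 : Module.finrank E F = 3) (y : Fˣ) :
    {x : F | x ≠ 0 ∧ Algebra.trace E F (x ^ (Fintype.card E + 1)) = 0 ∧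
      Algebra.trace E F (y * x) = 0}.ncard =
      (Fintype.card E - 1) * (factorizations (singerSet E F) (scalarClass E y)).card := by
  have himage : {x : F | x ≠ 0 ∧ Algebra.trace E F (x ^ (Fintype.card E + 1)) = 0 ∧
      Algebra.trace E F (y * x) = 0} = (fun u : Fˣ ↦ (u⁻¹ : F)) ''
        (scalarClass E ⁻¹' factorizations (singerSet E F) (scalarClass E y)) := by
    ext x
    constructor
    · rintro ⟨hx, htrace⟩
      exact ⟨(Units.mk0 x hx)⁻¹, (scalarClass_inv_mem_factorizations h3 _ _).2 htrace, by simp⟩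
    · rintro ⟨u, hu, rfl⟩
      refine ⟨inv_ne_zero u.ne_zero, ?_⟩
      have h := (scalarClass_inv_mem_factorizations h3 u⁻¹ y).1 (by rwa [inv_inv])
      simpa using h
  rw [himage, Set.ncard_image_of_injective, ncard_preimage_scalarClass, Set.ncard_coe_finset]
  exact inv_injective.comp Units.val_injective

end NormTower

section Translation

open scoped Classical

/-- The nontrivial additive character of `𝔽₂`. -/
def signChar : AddChar (ZMod 2) ℤ :=
  AddChar.zmodChar 2 (ζ := -1) (by norm_num)

lemma signChar_ne_one : signChar ≠ 1 := fun h ↦ by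
  have h1 : (-1 : ℤ) ^ (1 : ZMod 2).val = 1 := DFunLike.congr_fun h 1
  simp [ZMod.val_one] at h1

lemma psi_eq_signChar_trace {F : Type*} [Field F] [Algebra (ZMod 2) F] (x : F) :
    psi F x = signChar (Algebra.trace (ZMod 2) F x) := by
  rw [psi]
  generalize Algebra.trace (ZMod 2) F x = t
  change _ = (-1 : ℤ) ^ t.val
  revert t
  decide

variable {E F H : Type*} [Field E] [Field F] [Field H] [Algebra E F] [Algebra F H] {s : ℕ}

lemma coe_mem_Rclass_iff {T : Set (ZMod (Mof s))} {S : Finset (ScalarClass E F)} {β : Hˣ}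
    (hβ : ∀ v, v ∈ Subgroup.zpowers β)
    (hT : ∀ a : ℤ, (a : ZMod (Mof s)) ∈ T ↔
      scalarClass E (Units.map (Algebra.norm F) β) ^ a ∈ S) (v : Hˣ) :
    (v : H) ∈ Rclass s (β : H) T ↔ scalarClass E (Units.map (Algebra.norm F) v) ∈ S := by
  simp only [Rclass, cyc, Set.mem_iUnion, Set.mem_ofPred_eq, exists_prop]
  constructor
  · rintro ⟨i, hi, t, hv⟩
    have hv' : v = β ^ ((i.val : ℤ) + (Mof s : ℤ) * t) := Units.ext (by simpa using hv)
    rw [hv', map_zpow, map_zpow, ← hT]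
    rwa [Int.cast_add, Int.cast_mul, Int.cast_natCast, Int.cast_natCast, ZMod.natCast_self,
      zero_mul, add_zero, ZMod.natCast_zmod_val]
  · intro hv
    obtain ⟨m, rfl⟩ := hβ v
    refine ⟨(m : ZMod (Mof s)), (hT m).2 (by simpa using hv), m / Mof s, ?_⟩
    rw [ZMod.val_intCast, Int.emod_add_mul_ediv, Units.val_zpow_eq_zpow_val]

lemma zero_notMem_Rclass (β : Hˣ) (T : Set (ZMod (Mof s))) : (0 : H) ∉ Rclass s (β : H) T := by
  simp only [Rclass, cyc, Set.mem_iUnion, Set.mem_ofPred_eq, not_exists]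
  exact fun i _ t ht ↦ zpow_ne_zero _ β.ne_zero ht.symm

lemma psiSum_eq_sum_units [Fintype H] [Algebra (ZMod 2) H] (c : H) {S : Set H} (hS : 0 ∉ S) :
    psiSum H c S = ∑ v : Hˣ with v.val ∈ S, psi H (c * v) := by
  have hzero : (if (0 : H) ∈ S then psi H (c * 0) else 0) = 0 := if_neg hS
  have hunits := sum_eq_add_sum_units fun x ↦ if x ∈ S then psi H (c * x) else 0
  rw [hzero, zero_add] at hunits
  rw [psiSum, finsum_mem_eq_finite_toFinset_sum _ (Set.toFinite S), Finset.sum_filter, ← hunits,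
    ← Finset.sum_filter]
  exact Finset.sum_congr (Finset.ext fun x ↦ by simp) fun _ _ ↦ rfl

variable [Fintype E]

lemma trFE_eq_trace [Finite F] (hE : Fintype.card E = 2 ^ s) (h3 : Module.finrank E F = 3) (x : F) :
    trFE s x = algebraMap E F (Algebra.trace E F x) := by
  rw [FiniteField.algebraMap_trace_eq_sum_pow, h3, Nat.card_eq_fintype_card, hE, trFE]
  simp [Finset.sum_range_succ, ← pow_mul, mul_comm]

variable [Fintype F]

lemma ncard_Sa (hE : Fintype.card E = 2 ^ s) (h3 : Module.finrank E F = 3) (ω : Fˣ) (a : ℤ) :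
    (Sa s (ω : F) a).ncard =
      (2 ^ s - 1) * (factorizations (singerSet E F) (scalarClass E ω ^ a)).card := by
  rw [← map_zpow, ← hE, ← ncard_trace_eq_zero h3]
  simp only [Sa, trFE_eq_trace hE h3, map_eq_zero, hE, Units.val_zpow_eq_zpow_val]

lemma ncard_Sa_val (hE : Fintype.card E = 2 ^ s) (h3 : Module.finrank E F = 3) (ω : Fˣ) (a : ℤ) :
    (Sa s (ω : F) ((a : ZMod (Mof s)).val)).ncard =
      (2 ^ s - 1) * (factorizations (singerSet E F) (scalarClass E ω ^ a)).card := by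
  have hM : Fintype.card (ScalarClass E F) = Mof s := by
    rw [(isPlanarDifferenceSet_singerSet h3).card_univ, hE, ← pow_mul, mul_comm s]
  rw [ncard_Sa hE h3, ZMod.val_intCast, ← hM, zpow_mod_card]

lemma ncard_Sa_val_eq_mul_iff (hE : Fintype.card E = 2 ^ s) (h3 : Module.finrank E F = 3) (ω : Fˣ)
    (a : ℤ) (n : ℕ) : (Sa s (ω : F) ((a : ZMod (Mof s)).val)).ncard = n * (2 ^ s - 1) ↔
      scalarClass E ω ^ a ∈ factorizationLevel (singerSet E F) n := by
  have hpos : 0 < 2 ^ s - 1 := hE ▸ Nat.sub_pos_of_lt Fintype.one_lt_card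
  rw [ncard_Sa_val hE h3, mem_factorizationLevel, mul_comm n, Nat.mul_right_inj hpos.ne']

lemma intCast_mem_T1_iff (hE : Fintype.card E = 2 ^ s) (h3 : Module.finrank E F = 3) (ω : Fˣ)
    (a : ℤ) : (a : ZMod (Mof s)) ∈ T1 s (ω : F) ↔
      scalarClass E ω ^ a ∈ factorizationLevel (singerSet E F) 1 := by
  rw [T1, Set.mem_ofPred_eq, ← ncard_Sa_val_eq_mul_iff hE h3, one_mul]

lemma intCast_mem_T2_iff (hE : Fintype.card E = 2 ^ s) (h3 : Module.finrank E F = 3) (ω : Fˣ)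
    (a : ℤ) : (a : ZMod (Mof s)) ∈ T2 s (ω : F) ↔
      scalarClass E ω ^ a ∈ factorizationLevel (singerSet E F) 2 :=
  ncard_Sa_val_eq_mul_iff hE h3 ω a 2

lemma intCast_mem_T3_iff (hE : Fintype.card E = 2 ^ s) (h3 : Module.finrank E F = 3) (ω : Fˣ)
    (a : ℤ) : (a : ZMod (Mof s)) ∈ T3 s (ω : F) ↔
      scalarClass E ω ^ a ∈ factorizationLevel (singerSet E F) 0 := by
  rw [T3, Set.mem_ofPred_eq, ← ncard_Sa_val_eq_mul_iff hE h3, zero_mul]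

variable [Finite H] [Algebra (ZMod 2) H] [Algebra (ZMod 2) E]

lemma psiSum_Rclass {T : Set (ZMod (Mof s))} {S : Finset (ScalarClass E F)} {β : Hˣ}
    (hF : Module.finrank F H = 3) (hβ : ∀ v, v ∈ Subgroup.zpowers β)
    (hT : ∀ a : ℤ, (a : ZMod (Mof s)) ∈ T ↔
      scalarClass E (Units.map (Algebra.norm F) β) ^ a ∈ S) (a : ℤ) :
    psiSum H ((β : H) ^ a) (Rclass s (β : H) T) =
      (gaussElement (singerSet E F) (Fintype.card E) ^ 3 * inversion (indicatorSum S)).coeff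
        (scalarClass E (Units.map (Algebra.norm F) β) ^ a) := by
  have := Fintype.ofFinite H
  have hψ := compAddMonoidHom_trace_ne_one (L := E) signChar_ne_one
  have hsum := sum_scalarClass_norm_mem hψ S (β ^ a)
  rw [hF, Even.neg_one_pow (by decide), one_mul, map_zpow, map_zpow] at hsum
  let _ : Algebra (ZMod 2) F := ((algebraMap E F).comp (algebraMap (ZMod 2) E)).toAlgebra
  rw [psiSum_eq_sum_units _ (zero_notMem_Rclass β T), ← hsum]
  simp only [coe_mem_Rclass_iff hβ hT, psi_eq_signChar_trace, Units.val_zpow_eq_zpow_val,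
    AddChar.compAddMonoidHom_apply, AddMonoidHom.coe_coe, trace_zmod_trace]

end Translation

theorem exists_factorization_count_psiSum_eq (s : ℕ) (hs : 1 ≤ s) (F H : Type*) [Field F]
    [Fintype F] [Algebra (ZMod 2) F] [Field H] [Fintype H] [Algebra (ZMod 2) H]
    (hF : Fintype.card F = 2 ^ (3 * s)) (hH : Fintype.card H = 2 ^ (9 * s))
    (f : F →+* H) (β : H) (hβ : ∀ x : H, x ≠ 0 → ∃ n : ℕ, x = β ^ n)
    (ω : F) (hω : f ω = β ^ (1 + 2 ^ (3 * s) + 2 ^ (6 * s))) (a : ℤ) :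
    ∃ r : ℕ, ((a : ZMod (Mof s)) ∈ T1 s ω → r = 1) ∧ ((a : ZMod (Mof s)) ∈ T2 s ω → r = 2) ∧
      ((a : ZMod (Mof s)) ∈ T3 s ω → r = 0) ∧
      psiSum H (β ^ a) (Rclass s β (T1 s ω)) =
        (2 ^ s) ^ 4 * r - ((2 ^ s) ^ 4 + (2 ^ s) ^ 3 - (2 ^ s) ^ 2 + 1) ∧
      2 * psiSum H (β ^ a) (Rclass s β (T2 s ω)) =
        (if r = 1 then (2 ^ s) ^ 5 else 0) - (2 ^ s) ^ 4 * r + ((2 ^ s) ^ 3 - 2 ^ s) ∧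
      psiSum H (β ^ a) (Rclass s β (T3 s ω)) + psiSum H (β ^ a) (Rclass s β (T1 s ω)) +
        psiSum H (β ^ a) (Rclass s β (T2 s ω)) = -1 := by
  classical
  obtain ⟨E, hcard⟩ := exists_intermediateField_card_eq (Nat.one_le_iff_ne_zero.1 hs) hF
  let _ : Algebra F H := f.toAlgebra
  have : CharP E 2 := charP_of_injective_algebraMap (algebraMap (ZMod 2) E).injective 2
  have hE : Fintype.card E = 2 ^ s := Nat.card_eq_fintype_card.symm.trans hcard
  have hEF : Module.finrank E F = 3 :=
    finrank_eq_of_card_eq_pow (by rw [hF, hE, ← pow_mul, mul_comm])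
  have hFH : Module.finrank F H = 3 :=
    finrank_eq_of_card_eq_pow (by rw [hF, hH, ← pow_mul]; ring_nf)
  obtain ⟨b, rfl, hb⟩ := exists_units_generator (hH ▸ lt_self_pow₀ one_lt_two (by omega)) hβ
  obtain rfl : (Units.map (Algebra.norm F) b : F) = ω := f.injective <| by
    refine (algebraMap_norm_of_finrank_eq_three hFH (b : H)).trans ?_
    rw [hω, hF, ← pow_mul, show 3 * s * 2 = 6 * s by ring]
  have hD := isPlanarDifferenceSet_singerSet hEF
  have hsq := fun c : ScalarClass E F ↦ mem_singerSet_iff_exists_mul_self (c := c)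
  have hq : (Fintype.card E : ℤ) = 2 ^ s := by exact_mod_cast hE
  rw [psiSum_Rclass hFH hb (intCast_mem_T1_iff hE hEF _),
    psiSum_Rclass hFH hb (intCast_mem_T2_iff hE hEF _),
    psiSum_Rclass hFH hb (intCast_mem_T3_iff hE hEF _),
    intCast_mem_T1_iff hE hEF, intCast_mem_T2_iff hE hEF, intCast_mem_T3_iff hE hEF]
  simp only [mem_factorizationLevel, ← hq]
  exact ⟨_, id, id, id, hD.coeff_gaussElement_pow_three_mul_level_one hsq _,
    hD.two_mul_coeff_gaussElement_pow_three_mul_level_two hsq _,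
    hD.coeff_gaussElement_pow_three_mul_level_add _⟩

theorem statement19 (s : ℕ) (hs : 1 ≤ s) (F H : Type*) [Field F] [Fintype F] [Algebra (ZMod 2) F]
    [Field H] [Fintype H] [Algebra (ZMod 2) H]
    (hF : Fintype.card F = 2 ^ (3 * s)) (hH : Fintype.card H = 2 ^ (9 * s))
    (f : F →+* H) (β : H) (hβ : ∀ x : H, x ≠ 0 → ∃ n : ℕ, x = β ^ n)
    (ω : F) (hω : f ω = β ^ (1 + 2 ^ (3 * s) + 2 ^ (6 * s)))
    (hωgen : ∀ x : F, x ≠ 0 → ∃ n : ℕ, x = ω ^ n) :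
    ∀ a : ℤ,
      ((a : ZMod (Mof s)) ∈ T1 s ω →
        psiSum H (β ^ a) (Rclass s β (T1 s ω)) = -(2 ^ (3 * s)) + 2 ^ (2 * s) - 1 ∧
        psiSum H (β ^ a) (Rclass s β (T2 s ω)) =
          2 ^ (s - 1) * (2 ^ s - 1) * (2 ^ (3 * s) + 2 ^ s + 1) ∧
        psiSum H (β ^ a) (Rclass s β (T3 s ω)) =
          -(2 ^ (s - 1)) * (2 ^ s - 1) * (2 ^ (3 * s) - 2 ^ s + 1)) ∧
      ((a : ZMod (Mof s)) ∈ T2 s ω →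
        psiSum H (β ^ a) (Rclass s β (T1 s ω)) = (2 ^ s - 1) * (2 ^ (3 * s) + 2 ^ s + 1) ∧
        psiSum H (β ^ a) (Rclass s β (T2 s ω)) =
          -(2 ^ (s - 1)) * (2 ^ (3 * s + 1) - 2 ^ (2 * s) + 1) ∧
        psiSum H (β ^ a) (Rclass s β (T3 s ω)) = 2 ^ (s - 1) * (2 ^ s - 1) ^ 2) ∧
      ((a : ZMod (Mof s)) ∈ T3 s ω →
        psiSum H (β ^ a) (Rclass s β (T1 s ω)) = -((2 ^ s + 1) * (2 ^ (3 * s) - 2 ^ s + 1)) ∧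
        psiSum H (β ^ a) (Rclass s β (T2 s ω)) = 2 ^ (s - 1) * (2 ^ (2 * s) - 1) ∧
        psiSum H (β ^ a) (Rclass s β (T3 s ω)) =
          2 ^ (s - 1) * (2 ^ (3 * s + 1) + 2 ^ (2 * s) - 2 ^ (s + 1) + 1)) := by
  intro a
  obtain ⟨r, hr1, hr2, hr3, h1, h2, h3⟩ :=
    exists_factorization_count_psiSum_eq s hs F H hF hH f β hβ ω hω a
  obtain ⟨k, rfl⟩ : ∃ k, s = k + 1 := ⟨s - 1, by omega⟩
  have hcube : (2 : ℤ) ^ (3 * (k + 1)) = (2 ^ (k + 1)) ^ 3 := by rw [← pow_mul, mul_comm]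
  have hsquare : (2 : ℤ) ^ (2 * (k + 1)) = (2 ^ (k + 1)) ^ 2 := by rw [← pow_mul, mul_comm]
  have hdouble : (2 : ℤ) ^ (k + 1) = 2 * 2 ^ k := pow_succ' 2 k
  rw [pow_succ (2 : ℤ) (3 * (k + 1)), pow_succ (2 : ℤ) (k + 1), hcube, hsquare,
    Nat.add_sub_cancel]
  rw [hdouble] at h1 h2 ⊢
  generalize (2 : ℤ) ^ k = p at *
  refine ⟨fun ha ↦ ?_, fun ha ↦ ?_, fun ha ↦ ?_⟩
  · rw [hr1 ha] at h1 h2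
    norm_num at h1 h2
    refine ⟨by linarith, by linarith, by linarith⟩
  · rw [hr2 ha] at h1 h2
    norm_num at h1 h2
    refine ⟨by linarith, by linarith, by linarith⟩
  · rw [hr3 ha] at h1 h2
    norm_num at h1 h2
    refine ⟨by linarith, by linarith, by linarith⟩
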